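/- Let M and H be n×n real symmetric matrices with eigenvalues λ_1 ≥ ⋯ ≥ λ_n for M and λ̃_1 ≥ ⋯ ≥ λ̃_n for M+H, and let ṽ^(1), …, ṽ^(n) be an orthonormal basis of ℝ^n with (M+H) ṽ^(i) = λ̃_i ṽ^(i). Fix s, let Λ_s = { i : λ_i = λ_s }, d_s = |Λ_s|, and δ_s = min_{i ∉ Λ_s} |λ_s − λ_i|. Then there exists an orthonormal family { v^(i) }_{i ∈ Λ_s} of eigenvectors of M with eigenvalue λ_s such that for every i ∈ Λ_s, ⟨ṽ^(i), v^(i)⟩ ≥ 1 − 4 d_s ( ‖H‖ / δ_s )². -/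

import Mathlib

open Matrix

/-- The spectral (operator) norm of a real square matrix. -/
noncomputable def specNorm {n : ℕ} (A : Matrix (Fin n) (Fin n) ℝ) : ℝ :=
  ‖Matrix.toEuclideanCLM (𝕜 := ℝ) A‖

/-- `d_s = |Λ_s|`, the multiplicity of the eigenvalue `λ_s`. -/
noncomputable def eigMult {n : ℕ} (lam : Fin n → ℝ) (s : Fin n) : ℕ :=
  Nat.card {i : Fin n // lam i = lam s}

/-- `δ_s = min_{i ∉ Λ_s} |λ_s - λ_i|`, the gap between `λ_s` and the nearest
distinct eigenvalue. -/
noncomputable def eigGap {n : ℕ} (lam : Fin n → ℝ) (s : Fin n) : ℝ :=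
  sInf {x : ℝ | ∃ i, lam i ≠ lam s ∧ x = |lam s - lam i|}

/-!
Let `U` be the `λ_s`-eigenspace of `M` and `P` its orthogonal projection. By Weyl's inequality
`‖(M - λ_s) ṽ^(i)‖ ≤ 2 ‖H‖` for `i ∈ Λ_s`, while `M - λ_s` expands `Uᗮ` by at least the factor
`δ_s`; so `‖ṽ^(i) - P ṽ^(i)‖ ≤ 2 ‖H‖ / δ_s`. The aligned basis comes from the polar decomposition
`Q |A|` of `A`, the restriction of `P` to the span of the `ṽ^(i)`: take `v^(i) = Q ṽ^(i)`. Since `A`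
is a contraction, `|A|² ≤ |A|`, whence `⟪ṽ^(i), v^(i)⟫ ≥ ‖P ṽ^(i)‖² = 1 - ‖ṽ^(i) - P ṽ^(i)‖²`.
The factor `d_s` does not enter.
-/

section Eigenvalues

variable {n : ℕ} {lam : Fin n → ℝ} {i s : Fin n}

theorem one_le_eigMult (lam : Fin n → ℝ) (s : Fin n) : 1 ≤ eigMult lam s :=
  have : Nonempty {i // lam i = lam s} := ⟨⟨s, rfl⟩⟩
  Nat.card_pos

theorem isLeast_eigGap (h : ∃ i, lam i ≠ lam s) :
    IsLeast {x : ℝ | ∃ i, lam i ≠ lam s ∧ x = |lam s - lam i|} (eigGap lam s) := by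
  have hfin : {x : ℝ | ∃ i, lam i ≠ lam s ∧ x = |lam s - lam i|}.Finite :=
    (Set.finite_range fun i => |lam s - lam i|).subset fun _ ⟨i, _, hx⟩ => ⟨i, hx.symm⟩
  obtain ⟨i, hi⟩ := h
  exact ⟨Set.Nonempty.csInf_mem ⟨_, i, hi, rfl⟩ hfin, fun _ hx => csInf_le hfin.bddBelow hx⟩

theorem eigGap_le (h : lam i ≠ lam s) : eigGap lam s ≤ |lam s - lam i| :=
  (isLeast_eigGap ⟨i, h⟩).2 ⟨i, h, rfl⟩

theorem eigGap_nonneg (lam : Fin n → ℝ) (s : Fin n) : 0 ≤ eigGap lam s :=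
  Real.sInf_nonneg fun _ ⟨_, _, hx⟩ => hx ▸ abs_nonneg _

theorem eigGap_pos (h : ∃ i, lam i ≠ lam s) : 0 < eigGap lam s := by
  obtain ⟨i, hi, hgap⟩ := (isLeast_eigGap h).1
  exact hgap ▸ abs_pos.2 (sub_ne_zero.2 hi.symm)

end Eigenvalues

section InnerProductSpace

open Module Module.End RCLike
open scoped InnerProductSpace

variable {𝕜 E F ι : Type*} [RCLike 𝕜]
  [NormedAddCommGroup E] [InnerProductSpace 𝕜 E] [NormedAddCommGroup F] [InnerProductSpace 𝕜 F]

section Alignment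

theorem exists_orthonormalBasis_apply_eq_norm_smul [FiniteDimensional 𝕜 E] [FiniteDimensional 𝕜 F]
    {n : ℕ} (hE : finrank 𝕜 E = n) (hF : finrank 𝕜 F = n) (A : E →ₗ[𝕜] F) :
    ∃ (e : OrthonormalBasis (Fin n) 𝕜 E) (f : OrthonormalBasis (Fin n) 𝕜 F),
      ∀ k, A (e k) = (‖A (e k)‖ : 𝕜) • f k := by
  have hA := A.isPositive_adjoint_comp_self.isSymmetric
  set e := hA.eigenvectorBasis hE
  have orthogonal_image {j k} (hjk : j ≠ k) : ⟪A (e j), A (e k)⟫_𝕜 = 0 := by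
    rw [← LinearMap.adjoint_inner_right, ← LinearMap.comp_apply, hA.apply_eigenvectorBasis,
      inner_smul_right, e.inner_eq_zero hjk, mul_zero]
  have orthonormal_normalized : Orthonormal 𝕜
      ({k | A (e k) ≠ 0}.domRestrict fun k => (‖A (e k)‖⁻¹ : 𝕜) • A (e k)) := by
    refine ⟨fun k => norm_smul_inv_norm k.2, fun j k hjk => ?_⟩
    simp only [Set.domRestrict_apply, inner_smul_left, inner_smul_right,
      orthogonal_image (Subtype.coe_ne_coe.2 hjk), mul_zero]
  obtain ⟨f, hf⟩ := orthonormal_normalized.exists_orthonormalBasis_extension_of_card_eq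
    (hF.trans (Fintype.card_fin n).symm)
  refine ⟨e, f, fun k => ?_⟩
  by_cases hk : A (e k) = 0
  · simp [hk]
  · rw [hf k hk, smul_inv_smul₀ (by simpa using hk)]

theorem exists_linearIsometryEquiv_norm_sq_le_re_inner [FiniteDimensional 𝕜 E]
    [FiniteDimensional 𝕜 F] (h : finrank 𝕜 E = finrank 𝕜 F) (A : E →ₗ[𝕜] F)
    (hA : ∀ x, ‖A x‖ ≤ ‖x‖) :
    ∃ Q : E ≃ₗᵢ[𝕜] F, ∀ x, ‖A x‖ ^ 2 ≤ re ⟪A x, Q x⟫_𝕜 := by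
  obtain ⟨e, f, hef⟩ := exists_orthonormalBasis_apply_eq_norm_smul rfl h.symm A
  set Q := e.equiv f (Equiv.refl _)
  refine ⟨Q, fun x => ?_⟩
  have inner_A (k) : ⟪f k, A x⟫_𝕜 = ‖A (e k)‖ * ⟪e k, x⟫_𝕜 := by
    conv_lhs => rw [← e.sum_repr' x]
    simp only [map_sum, map_smul, inner_sum, inner_smul_right]
    rw [Finset.sum_eq_single k]
    · rw [hef k, inner_smul_right, f.inner_eq_one, mul_one, ← hef k, mul_comm]
    · intro j _ hjk
      rw [hef j, inner_smul_right, f.inner_eq_zero hjk.symm, mul_zero, mul_zero]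
    · simp
  have inner_Q (k) : ⟪f k, Q x⟫_𝕜 = ⟪e k, x⟫_𝕜 := by
    rw [← Q.inner_map_map (e k) x, e.equiv_apply_basis, Equiv.refl_apply]
  have singularValue_le_one (k) : ‖A (e k)‖ ≤ 1 := (hA _).trans_eq (e.norm_eq_one k)
  calc ‖A x‖ ^ 2 = ∑ k, ‖A (e k)‖ ^ 2 * ‖⟪e k, x⟫_𝕜‖ ^ 2 := by
        simp only [← f.sum_sq_norm_inner_right, inner_A, norm_mul, norm_ofReal, abs_norm, mul_pow]
    _ ≤ ∑ k, ‖A (e k)‖ * ‖⟪e k, x⟫_𝕜‖ ^ 2 := by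
        gcongr with k
        exact pow_le_of_le_one (norm_nonneg _) (singularValue_le_one k) two_ne_zero
    _ = re ⟪A x, Q x⟫_𝕜 := by
        rw [← f.sum_inner_mul_inner, map_sum]
        refine Finset.sum_congr rfl fun k _ => ?_
        rw [← inner_conj_symm (A x), inner_A, inner_Q, map_mul (starRingEnd 𝕜), conj_ofReal,
          mul_assoc, RCLike.conj_mul, ← ofReal_pow, ← ofReal_mul, ofReal_re]

theorem exists_orthonormal_norm_starProjection_sq_le_re_inner [Fintype ι] (U : Submodule 𝕜 E)
    [FiniteDimensional 𝕜 U] (hU : finrank 𝕜 U = Fintype.card ι) {c : ι → E}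
    (hc : Orthonormal 𝕜 c) :
    ∃ v : ι → E, Orthonormal 𝕜 v ∧ (∀ i, v i ∈ U) ∧
      ∀ i, ‖U.starProjection (c i)‖ ^ 2 ≤ re ⟪c i, v i⟫_𝕜 := by
  let V := Submodule.span 𝕜 (Set.range c)
  have : FiniteDimensional 𝕜 V := FiniteDimensional.span_of_finite 𝕜 (Set.finite_range c)
  have hVU : finrank 𝕜 V = finrank 𝕜 U := (finrank_span_eq_card hc.linearIndependent).trans hU.symm
  obtain ⟨Q, hQ⟩ := exists_linearIsometryEquiv_norm_sq_le_re_inner hVU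
    (U.orthogonalProjectionOnto.toLinearMap ∘ₗ V.subtype)
    fun x => U.norm_orthogonalProjectionOnto_apply_le x
  let cV : ι → V := fun i => ⟨c i, Submodule.subset_span ⟨i, rfl⟩⟩
  have hcV : Orthonormal 𝕜 cV := V.subtypeₗᵢ.orthonormal_comp_iff.1 hc
  refine ⟨fun i => Q (cV i), (hcV.comp_linearIsometryEquiv Q).comp_linearIsometry U.subtypeₗᵢ,
    fun i => (Q (cV i)).2, fun i => (hQ (cV i)).trans_eq ?_⟩
  exact congrArg re (U.inner_orthogonalProjectionOnto_eq_of_mem_right _ _)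

end Alignment

section OrthonormalEigenbasis

variable [Fintype ι] (b : OrthonormalBasis ι 𝕜 E)

theorem inner_apply_of_eigenbasis {T : E →ₗ[𝕜] E} {a : ι → 𝕜} (hT : ∀ k, T (b k) = a k • b k)
    (k : ι) (x : E) : ⟪b k, T x⟫_𝕜 = a k * ⟪b k, x⟫_𝕜 := by
  classical
  conv_lhs => rw [← b.sum_repr' x]
  simp [hT, inner_sum, inner_smul_right, b.inner_eq_ite, mul_comm]

theorem re_inner_apply_of_eigenbasis {T : E →ₗ[𝕜] E} {a : ι → ℝ}
    (hT : ∀ k, T (b k) = (a k : 𝕜) • b k) (x : E) :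
    re ⟪x, T x⟫_𝕜 = ∑ k, a k * ‖⟪b k, x⟫_𝕜‖ ^ 2 := by
  rw [← b.sum_inner_mul_inner, map_sum]
  refine Finset.sum_congr rfl fun k _ => ?_
  rw [inner_apply_of_eigenbasis b hT, mul_left_comm, re_ofReal_mul, inner_mul_symm_re_eq_norm,
    norm_mul, norm_inner_symm, sq]

theorem mem_orthogonal_eigenspace_of_eigenbasis {T : E →ₗ[𝕜] E} {a : ι → 𝕜}
    (hT : ∀ k, T (b k) = a k • b k) {ν : 𝕜} {k : ι} (hk : a k ≠ ν) : b k ∈ (eigenspace T ν)ᗮ := by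
  refine (Submodule.mem_orthogonal' _ _).2 fun x hx => ?_
  have h : a k * ⟪b k, x⟫_𝕜 = ν * ⟪b k, x⟫_𝕜 := by
    rw [← inner_apply_of_eigenbasis b hT, mem_eigenspace_iff.1 hx, inner_smul_right]
  exact (mul_eq_mul_right_iff.1 h).resolve_left hk

theorem eigenspace_eq_span_of_eigenbasis {T : E →ₗ[𝕜] E} {a : ι → 𝕜}
    (hT : ∀ k, T (b k) = a k • b k) (ν : 𝕜) :
    eigenspace T ν = Submodule.span 𝕜 (Set.range fun k : {k // a k = ν} => b k) := by
  refine le_antisymm (fun x hx => ?_) (Submodule.span_le.2 ?_)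
  · rw [← b.sum_repr' x]
    refine Submodule.sum_mem _ fun k _ => ?_
    by_cases hk : a k = ν
    · exact Submodule.smul_mem _ _ (Submodule.subset_span ⟨⟨k, hk⟩, rfl⟩)
    · rw [(Submodule.mem_orthogonal' _ _).1 (mem_orthogonal_eigenspace_of_eigenbasis b hT hk) x hx,
        zero_smul]
      exact Submodule.zero_mem _
  · rintro _ ⟨⟨k, rfl⟩, rfl⟩
    exact mem_eigenspace_iff.2 (hT k)

theorem finrank_eigenspace_of_eigenbasis {T : E →ₗ[𝕜] E} {a : ι → 𝕜}
    (hT : ∀ k, T (b k) = a k • b k) (ν : 𝕜) [Fintype {k // a k = ν}] :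
    finrank 𝕜 (eigenspace T ν) = Fintype.card {k // a k = ν} := by
  rw [eigenspace_eq_span_of_eigenbasis b hT]
  exact finrank_span_eq_card (b.orthonormal.comp _ Subtype.val_injective).linearIndependent

theorem mul_norm_starProjection_orthogonal_eigenspace_le {T : E →ₗ[𝕜] E} {a : ι → 𝕜}
    (hT : ∀ k, T (b k) = a k • b k) {ν : 𝕜} [(eigenspace T ν).HasOrthogonalProjection] {δ : ℝ}
    (hδ : ∀ k, a k ≠ ν → δ ≤ ‖a k - ν‖) (x : E) :
    δ * ‖(eigenspace T ν)ᗮ.starProjection x‖ ≤ ‖T x - ν • x‖ := by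
  rcases lt_or_ge δ 0 with hneg | hδ0
  · exact (mul_nonpos_of_nonpos_of_nonneg hneg.le (norm_nonneg _)).trans (norm_nonneg _)
  refine le_of_sq_le_sq ?_ (norm_nonneg _)
  rw [mul_pow, ← b.sum_sq_norm_inner_right, ← b.sum_sq_norm_inner_right, Finset.mul_sum]
  refine Finset.sum_le_sum fun k _ => ?_
  rw [← mul_pow, inner_sub_right, inner_apply_of_eigenbasis b hT, inner_smul_right, ← sub_mul,
    norm_mul, ← Submodule.inner_starProjection_left_eq_right]
  by_cases hk : a k = ν
  · have hbk : b k ∈ eigenspace T ν := mem_eigenspace_iff.2 (hk ▸ hT k)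
    rw [Submodule.starProjection_orthogonal_apply_eq_zero hbk]
    simp [hk]
  · rw [Submodule.starProjection_eq_self_iff.2 (mem_orthogonal_eigenspace_of_eigenbasis b hT hk)]
    gcongr
    exact hδ k hk

end OrthonormalEigenbasis

section Weyl

variable [Fintype ι] [LinearOrder ι]

theorem exists_ne_zero_forall_inner_eq_zero (hE : finrank 𝕜 E = Fintype.card ι) (b c : ι → E)
    (i : ι) :
    ∃ x ≠ 0, (∀ k, i < k → ⟪b k, x⟫_𝕜 = 0) ∧ ∀ k < i, ⟪c k, x⟫_𝕜 = 0 := by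
  let constraints : E →ₗ[𝕜] {k // k ≠ i} → 𝕜 :=
    LinearMap.pi fun k => innerₛₗ 𝕜 (if k.1 < i then c k else b k)
  have hrank : finrank 𝕜 ({k // k ≠ i} → 𝕜) < finrank 𝕜 E := by
    rw [finrank_fintype_fun_eq_card, hE]
    exact Fintype.card_subtype_lt (x := i) (by simp)
  have : FiniteDimensional 𝕜 E := .of_finrank_pos (Nat.zero_lt_of_lt hrank)
  obtain ⟨x, hx, hx0⟩ :=
    (Submodule.ne_bot_iff _).1 (LinearMap.ker_ne_bot_of_finrank_lt (f := constraints) hrank)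
  have hx' (k) (hk : k ≠ i) : ⟪if k < i then c k else b k, x⟫_𝕜 = 0 := congrFun hx ⟨k, hk⟩
  refine ⟨x, hx0, fun k hk => ?_, fun k hk => ?_⟩
  · simpa only [if_neg hk.not_gt] using hx' k hk.ne'
  · simpa only [if_pos hk] using hx' k hk.ne

variable (b c : OrthonormalBasis ι 𝕜 E)

theorem eigenvalue_le_add_of_re_inner_le {T S : E →ₗ[𝕜] E} {a m : ι → ℝ} (ha : Antitone a)
    (hm : Antitone m) (hT : ∀ k, T (b k) = (a k : 𝕜) • b k) (hS : ∀ k, S (c k) = (m k : 𝕜) • c k)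
    {h : ℝ} (hTS : ∀ x, re ⟪x, T x⟫_𝕜 ≤ re ⟪x, S x⟫_𝕜 + h * ‖x‖ ^ 2) (i : ι) :
    a i ≤ m i + h := by
  obtain ⟨x, hx, hbx, hcx⟩ :=
    exists_ne_zero_forall_inner_eq_zero (finrank_eq_card_basis b.toBasis) b c i
  have hT_lower : a i * ‖x‖ ^ 2 ≤ re ⟪x, T x⟫_𝕜 := by
    rw [re_inner_apply_of_eigenbasis b hT, ← b.sum_sq_norm_inner_right, Finset.mul_sum]
    refine Finset.sum_le_sum fun k _ => ?_
    rcases le_or_gt k i with hk | hk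
    · gcongr
      exact ha hk
    · simp [hbx k hk]
  have hS_upper : re ⟪x, S x⟫_𝕜 ≤ m i * ‖x‖ ^ 2 := by
    rw [re_inner_apply_of_eigenbasis c hS, ← c.sum_sq_norm_inner_right, Finset.mul_sum]
    refine Finset.sum_le_sum fun k _ => ?_
    rcases lt_or_ge k i with hk | hk
    · simp [hcx k hk]
    · gcongr
      exact hm hk
  have hx2 : 0 < ‖x‖ ^ 2 := by positivity
  refine le_of_mul_le_mul_right ?_ hx2
  linarith [hTS x]

theorem re_inner_le_re_inner_add_norm_sub (T S : E →L[𝕜] E) (x : E) :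
    re ⟪x, T x⟫_𝕜 ≤ re ⟪x, S x⟫_𝕜 + ‖T - S‖ * ‖x‖ ^ 2 := by
  have h : re ⟪x, (T - S) x⟫_𝕜 ≤ ‖T - S‖ * ‖x‖ ^ 2 :=
    calc re ⟪x, (T - S) x⟫_𝕜 ≤ ‖x‖ * ‖(T - S) x‖ := re_inner_le_norm _ _
      _ ≤ ‖x‖ * (‖T - S‖ * ‖x‖) := by gcongr; exact (T - S).le_opNorm x
      _ = ‖T - S‖ * ‖x‖ ^ 2 := by ring
  rw [_root_.sub_apply, inner_sub_right, map_sub] at h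
  linarith

theorem abs_eigenvalue_sub_le_norm_sub {T S : E →L[𝕜] E} {a m : ι → ℝ} (ha : Antitone a)
    (hm : Antitone m) (hT : ∀ k, T (b k) = (a k : 𝕜) • b k) (hS : ∀ k, S (c k) = (m k : 𝕜) • c k)
    (i : ι) : |m i - a i| ≤ ‖S - T‖ := by
  have h₁ := eigenvalue_le_add_of_re_inner_le b c (T := T) (S := S) ha hm hT hS
    (re_inner_le_re_inner_add_norm_sub T S) i
  have h₂ := eigenvalue_le_add_of_re_inner_le c b (T := S) (S := T) hm ha hS hT
    (re_inner_le_re_inner_add_norm_sub S T) i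
  rw [norm_sub_rev] at h₁
  exact abs_le.2 ⟨by linarith, by linarith⟩

theorem norm_apply_sub_eigenvalue_smul_le {T S : E →L[𝕜] E} {a m : ι → ℝ} (ha : Antitone a)
    (hm : Antitone m) (hT : ∀ k, T (b k) = (a k : 𝕜) • b k) (hS : ∀ k, S (c k) = (m k : 𝕜) • c k)
    (i : ι) : ‖T (c i) - (a i : 𝕜) • c i‖ ≤ 2 * ‖S - T‖ := by
  have hop : ‖(S - T) (c i)‖ ≤ ‖S - T‖ := (S - T).unit_le_opNorm _ (c.norm_eq_one i).le
  calc ‖T (c i) - (a i : 𝕜) • c i‖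
      = ‖((m i - a i : ℝ) : 𝕜) • c i - (S - T) (c i)‖ := by
        rw [_root_.sub_apply, hS, ofReal_sub, sub_smul]
        congr 1
        abel
    _ ≤ ‖((m i - a i : ℝ) : 𝕜) • c i‖ + ‖(S - T) (c i)‖ := norm_sub_le _ _
    _ = |m i - a i| + ‖(S - T) (c i)‖ := by rw [norm_smul, norm_ofReal, c.norm_eq_one, mul_one]
    _ ≤ 2 * ‖S - T‖ := by linarith [abs_eigenvalue_sub_le_norm_sub b c ha hm hT hS i]

end Weyl

section GapBound

variable {n : ℕ} (b c : OrthonormalBasis (Fin n) 𝕜 E) {T S : E →L[𝕜] E} {lam m : Fin n → ℝ}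

theorem norm_starProjection_orthogonal_eigenspace_le [FiniteDimensional 𝕜 E] (hlam : Antitone lam)
    (hm : Antitone m) (hT : ∀ k, T (b k) = (lam k : 𝕜) • b k)
    (hS : ∀ k, S (c k) = (m k : 𝕜) • c k) {i s : Fin n} (hi : lam i = lam s) :
    ‖(eigenspace (T : E →ₗ[𝕜] E) (lam s : 𝕜))ᗮ.starProjection (c i)‖
      ≤ 2 * (‖S - T‖ / eigGap lam s) := by
  by_cases h : ∃ k, lam k ≠ lam s
  · have gap_le (k) (hk : (lam k : 𝕜) ≠ lam s) : eigGap lam s ≤ ‖(lam k - lam s : 𝕜)‖ := by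
      rw [← ofReal_sub, norm_ofReal, abs_sub_comm]
      exact eigGap_le (mt (congrArg _) hk)
    have residual := norm_apply_sub_eigenvalue_smul_le b c hlam hm hT hS i
    rw [hi] at residual
    rw [← mul_div_assoc, le_div_iff₀' (eigGap_pos h)]
    exact (mul_norm_starProjection_orthogonal_eigenspace_le b hT gap_le (c i)).trans residual
  · -- `T` is scalar: `eigGap lam s = sInf ∅ = 0` makes the right-hand side `0`.
    push Not at h
    have hscalar : (T : E →ₗ[𝕜] E) = (lam s : 𝕜) • LinearMap.id :=
      b.toBasis.ext fun k => by simp [hT, h]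
    have hci : c i ∈ eigenspace (T : E →ₗ[𝕜] E) (lam s : 𝕜) :=
      mem_eigenspace_iff.2 (by rw [hscalar]; rfl)
    rw [Submodule.starProjection_orthogonal_apply_eq_zero hci, norm_zero]
    exact mul_nonneg zero_le_two (div_nonneg (norm_nonneg _) (eigGap_nonneg lam s))

theorem aligned_eigenspace_basis_general (hlam : Antitone lam) (hm : Antitone m)
    (hT : ∀ k, T (b k) = (lam k : 𝕜) • b k) (hS : ∀ k, S (c k) = (m k : 𝕜) • c k) (s : Fin n) :
    ∃ v : {i // lam i = lam s} → E, Orthonormal 𝕜 v ∧ (∀ i, T (v i) = (lam s : 𝕜) • v i) ∧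
      ∀ i, 1 - 4 * (‖S - T‖ / eigGap lam s) ^ 2 ≤ re ⟪c i.1, v i⟫_𝕜 := by
  classical
  have := b.toBasis.finiteDimensional_of_finite
  let U := eigenspace (T : E →ₗ[𝕜] E) (lam s : 𝕜)
  have hU : finrank 𝕜 U = Fintype.card {i // lam i = lam s} := by
    rw [finrank_eigenspace_of_eigenbasis b (T := T) hT]
    simp only [ofReal_inj]
  obtain ⟨v, hv, hvU, hcv⟩ := exists_orthonormal_norm_starProjection_sq_le_re_inner U hU
    (c.orthonormal.comp _ Subtype.val_injective)
  refine ⟨v, hv, fun i => mem_eigenspace_iff.1 (hvU i), fun ⟨i, hi⟩ => (hcv ⟨i, hi⟩).trans' ?_⟩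
  have hdist : ‖Uᗮ.starProjection (c i)‖ ^ 2 ≤ (2 * (‖S - T‖ / eigGap lam s)) ^ 2 := by
    gcongr
    exact norm_starProjection_orthogonal_eigenspace_le b c hlam hm hT hS hi
  have pythagoras := U.norm_sq_eq_add_norm_sq_starProjection (c i)
  rw [c.norm_eq_one, one_pow] at pythagoras
  change _ ≤ ‖U.starProjection (c i)‖ ^ 2
  linarith

end GapBound

end InnerProductSpace

section EuclideanSpace

variable {ι κ : Type*} [Fintype ι] [DecidableEq κ]

theorem orthonormal_toLp_iff_dotProduct {v : κ → ι → ℝ} :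
    Orthonormal ℝ (fun i => WithLp.toLp 2 (v i)) ↔
      ∀ i j, v i ⬝ᵥ v j = if i = j then (1 : ℝ) else 0 := by
  simp only [orthonormal_iff_ite, EuclideanSpace.inner_toLp_toLp, star_trivial, dotProduct_comm]

variable [DecidableEq ι] {A : Matrix ι ι ℝ}

theorem toEuclideanCLM_toLp_eq_smul_iff {x : ι → ℝ} {μ : ℝ} :
    toEuclideanCLM (𝕜 := ℝ) A (WithLp.toLp 2 x) = μ • WithLp.toLp 2 x ↔ A *ᵥ x = μ • x := by
  rw [toEuclideanCLM_toLp, ← WithLp.toLp_smul, (WithLp.toLp_injective 2).eq_iff]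

theorem exists_orthonormalBasis_toEuclideanCLM_eq_smul {v : ι → ι → ℝ} {a : ι → ℝ}
    (hv : ∀ i j, v i ⬝ᵥ v j = if i = j then (1 : ℝ) else 0) (hA : ∀ i, A *ᵥ v i = a i • v i) :
    ∃ b : OrthonormalBasis ι ℝ (EuclideanSpace ℝ ι), (∀ i, b i = WithLp.toLp 2 (v i)) ∧
      ∀ i, toEuclideanCLM (𝕜 := ℝ) A (b i) = a i • b i := by
  have h : Orthonormal ℝ (Set.univ.domRestrict fun i => WithLp.toLp 2 (v i)) :=
    (orthonormal_toLp_iff_dotProduct.2 hv).comp _ Subtype.val_injective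
  obtain ⟨b, hb⟩ := h.exists_orthonormalBasis_extension_of_card_eq finrank_euclideanSpace
  refine ⟨b, fun i => hb i trivial, fun i => ?_⟩
  rw [hb i trivial, toEuclideanCLM_toLp_eq_smul_iff.2 (hA i)]

end EuclideanSpace

/-- For a fixed eigenvalue `λ_s` of `M` there is an orthonormal family of
eigenvectors of `M` for `λ_s`, indexed by `Λ_s`, aligned with the corresponding
perturbed eigenvectors: `⟨ṽ^(i), v^(i)⟩ ≥ 1 - 4 d_s (‖H‖/δ_s)²`. -/
theorem aligned_eigenspace_basis {n : ℕ} (M H : Matrix (Fin n) (Fin n) ℝ)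
    (hM : M.IsSymm) (hH : H.IsSymm)
    (lam tlam : Fin n → ℝ) (hlam : Antitone lam) (htlam : Antitone tlam)
    (tv : Fin n → (Fin n → ℝ))
    (htON : ∀ i j, tv i ⬝ᵥ tv j = if i = j then (1 : ℝ) else 0)
    (hteig : ∀ i, (M + H).mulVec (tv i) = tlam i • tv i)
    (hMspec : ∃ w : Fin n → (Fin n → ℝ),
      (∀ i j, w i ⬝ᵥ w j = if i = j then (1 : ℝ) else 0) ∧
      ∀ i, M.mulVec (w i) = lam i • w i)
    (s : Fin n) :
    ∃ v : {i : Fin n // lam i = lam s} → (Fin n → ℝ),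
      (∀ i j, v i ⬝ᵥ v j = if i = j then (1 : ℝ) else 0) ∧
      (∀ i, M.mulVec (v i) = lam s • v i) ∧
      (∀ i, 1 - 4 * (eigMult lam s) * (specNorm H / eigGap lam s) ^ 2 ≤
        tv i.1 ⬝ᵥ v i) := by
  obtain ⟨w, hw, hweig⟩ := hMspec
  obtain ⟨b, -, hMb⟩ := exists_orthonormalBasis_toEuclideanCLM_eq_smul hw hweig
  obtain ⟨c, hc, hMHc⟩ := exists_orthonormalBasis_toEuclideanCLM_eq_smul htON hteig
  obtain ⟨v, hv, hveig, hcv⟩ := aligned_eigenspace_basis_general b c hlam htlam hMb hMHc s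
  refine ⟨fun i => (v i).ofLp, orthonormal_toLp_iff_dotProduct.1 hv,
    fun i => toEuclideanCLM_toLp_eq_smul_iff.1 (hveig i), fun i => ?_⟩
  have hd : (1 : ℝ) ≤ eigMult lam s := mod_cast one_le_eigMult lam s
  calc 1 - 4 * eigMult lam s * (specNorm H / eigGap lam s) ^ 2
      ≤ 1 - 4 * (specNorm H / eigGap lam s) ^ 2 := by gcongr; linarith
    _ ≤ inner ℝ (c i) (v i) := by
        simpa only [specNorm, ← map_sub, add_sub_cancel_left, RCLike.re_to_real] using hcv i
    _ = tv i.1 ⬝ᵥ v i := by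
        rw [hc, EuclideanSpace.inner_eq_star_dotProduct, star_trivial, dotProduct_comm]
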